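/- Let R be an orthonormal conditional rewrite system. For every i ∈ ℕ, if →_{β ∪ R(β)_i} is confluent, then →_{R(β)_{i+1}} commutes with →β: whenever u ←β* t →*_{R(β)_{i+1}} v there exists w with u →*_{R(β)_{i+1}} w ←β* v. -/

import Mathlib

/-!
The key point is the shape of the left-hand sides. If `l` is linear, algebraic and not a variable,
no β-redex of `lσ` meets `l`, so every parallel β-reduct of `lσ` is `lσ'` with `σ ▷β σ'`
(`Pat.inv_BPar`). The conditions `d = c` of the rule survive the passage from
`σ` to `σ'`: `dσ` and `cσ` β-reduce to `dσ'` and `cσ'`, and confluence of `→_{β ∪ R(β)_i}` keeps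
convertible terms joinable (`Joinable.of_reducts`). Hence `lσ' →_{R(β)_{i+1}} rσ'`, while
`rσ ▷β rσ'`.

As no left-hand side matches an abstraction or an applied abstraction, all remaining peaks are
compatible with the term structure. So a peak `u ◁β t →_{R(β)_{i+1}} v` closes
as `u →*_{R(β)_{i+1}} w ◁β v` (`CStep.diagram`). Tiling with this diagram gives commutation with
`▷β*`, which is `→β*`.
-/

set_option autoImplicit false

/-- λ-terms over a signature `Sig`, in de Bruijn representation
(terms are identified up to α-conversion). -/
inductive Tm (Sig : Type) : Type
  | var : ℕ → Tm Sig
  | app : Tm Sig → Tm Sig → Tm Sig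
  | lam : Tm Sig → Tm Sig
  | sym : Sig → Tm Sig

namespace Tm

variable {Sig : Type}

/-- Shift the free de Bruijn indices `≥ d` up by one. -/
def lift (d : ℕ) : Tm Sig → Tm Sig
  | var n => if n < d then var n else var (n + 1)
  | app t u => app (lift d t) (lift d u)
  | lam t => lam (lift (d + 1) t)
  | sym f => sym f

/-- Lift a parallel substitution under one binder. -/
def up (σ : ℕ → Tm Sig) : ℕ → Tm Sig
  | 0 => var 0
  | n + 1 => lift 0 (σ n)

/-- Capture-avoiding (parallel) substitution. -/
def subst (σ : ℕ → Tm Sig) : Tm Sig → Tm Sig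
  | var n => σ n
  | app t u => app (subst σ t) (subst σ u)
  | lam t => lam (subst (up σ) t)
  | sym f => sym f

def scons (u : Tm Sig) (σ : ℕ → Tm Sig) : ℕ → Tm Sig
  | 0 => u
  | n + 1 => σ n

/-- `subst1 u t` substitutes `u` for the de Bruijn variable `0` in `t`. -/
def subst1 (u t : Tm Sig) : Tm Sig := subst (scons u var) t

/-- `FVar t n` : de Bruijn index `n` occurs free in `t`. -/
def FVar : Tm Sig → ℕ → Prop
  | var m, n => m = n
  | app t u, n => FVar t n ∨ FVar u n
  | lam t, n => FVar t (n + 1)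
  | sym _, _ => False

/-- Closed terms. -/
def ClosedTm (t : Tm Sig) : Prop := ∀ n, ¬ FVar t n

def countVar : Tm Sig → ℕ → ℕ
  | var m, n => if m = n then 1 else 0
  | app t u, n => countVar t n + countVar u n
  | lam t, n => countVar t (n + 1)
  | sym _, _ => 0

/-- Linear terms: each variable occurs at most once. -/
def LinearTm (t : Tm Sig) : Prop := ∀ n, countVar t n ≤ 1

/-- `appList h [t1, …, tn] = h t1 … tn`. -/
def appList (h : Tm Sig) : List (Tm Sig) → Tm Sig
  | [] => h
  | u :: us => appList (app h u) us

/-- Applicative terms: terms containing no abstraction. -/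
inductive Applicative : Tm Sig → Prop
  | var (n : ℕ) : Applicative (var n)
  | sym (f : Sig) : Applicative (sym f)
  | app {t u : Tm Sig} : Applicative t → Applicative u → Applicative (app t u)

/-- Algebraic terms: `t ::= x | f t1 … tn`. -/
inductive Algebraic : Tm Sig → Prop
  | var (n : ℕ) : Algebraic (var n)
  | symApp (f : Sig) (ts : List (Tm Sig)) :
      (∀ t ∈ ts, Algebraic t) → Algebraic (appList (sym f) ts)

/-- `Subterm s t` : `s` is a subterm of `t`. -/
inductive Subterm : Tm Sig → Tm Sig → Prop
  | refl (t : Tm Sig) : Subterm t t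
  | appL {s t u : Tm Sig} : Subterm s t → Subterm s (app t u)
  | appR {s t u : Tm Sig} : Subterm s u → Subterm s (app t u)
  | lam {s t : Tm Sig} : Subterm s t → Subterm s (lam t)

/-- `lamN m t = λ…λ.t` with `m` abstractions. -/
def lamN : ℕ → Tm Sig → Tm Sig
  | 0, t => t
  | m + 1, t => lam (lamN m t)

end Tm

/-- β-reduction: the smallest rewrite relation (closed under abstraction, left and
right application and substitution) with `(λ.t) u →β t[0 := u]`. -/
inductive Beta {Sig : Type} : Tm Sig → Tm Sig → Prop
  | beta (t u : Tm Sig) : Beta (Tm.app (Tm.lam t) u) (Tm.subst1 u t)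
  | abs {t u : Tm Sig} : Beta t u → Beta (Tm.lam t) (Tm.lam u)
  | appL {t u v : Tm Sig} : Beta t u → Beta (Tm.app t v) (Tm.app u v)
  | appR {t u v : Tm Sig} : Beta t u → Beta (Tm.app v t) (Tm.app v u)
  | substC (σ : ℕ → Tm Sig) {t u : Tm Sig} : Beta t u → Beta (Tm.subst σ t) (Tm.subst σ u)

/-- Tait–Martin-Löf parallel β-reduction: the smallest parallel rewrite relation
with `(λ.t₁) t₂ ▷β u₁[0 := u₂]` whenever `t₁ ▷β u₁` and `t₂ ▷β u₂`. -/
inductive PBeta {Sig : Type} : Tm Sig → Tm Sig → Prop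
  | var (n : ℕ) : PBeta (Tm.var n) (Tm.var n)
  | sym (f : Sig) : PBeta (Tm.sym f) (Tm.sym f)
  | app {t₁ u₁ t₂ u₂ : Tm Sig} : PBeta t₁ u₁ → PBeta t₂ u₂ →
      PBeta (Tm.app t₁ t₂) (Tm.app u₁ u₂)
  | abs {t u : Tm Sig} : PBeta t u → PBeta (Tm.lam t) (Tm.lam u)
  | substC (σ : ℕ → Tm Sig) {t u : Tm Sig} : PBeta t u → PBeta (Tm.subst σ t) (Tm.subst σ u)
  | beta {t₁ u₁ t₂ u₂ : Tm Sig} : PBeta t₁ u₁ → PBeta t₂ u₂ →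
      PBeta (Tm.app (Tm.lam t₁) t₂) (Tm.subst1 u₂ u₁)

/-- β-normal forms. -/
def BetaNormal {Sig : Type} (t : Tm Sig) : Prop := ∀ u, ¬ Beta t u

/-- `IsBnf t n` : `n` is a β-normal form of `t`. -/
def IsBnf {Sig : Type} (t n : Tm Sig) : Prop :=
  Relation.ReflTransGen Beta t n ∧ BetaNormal n

/-- Weakly β-normalizing terms. -/
def WNbeta {Sig : Type} (t : Tm Sig) : Prop := ∃ n, IsBnf t n

/-- Conditional rewrite rule `d1 = c1 ∧ … ∧ dn = cn ⊃ l ↦ r`:  every variable of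
the `di`, `ci` and `r` occurs in `l`, and `l` is a non-variable algebraic term. -/
structure CondRule (Sig : Type) where
  conds : List (Tm Sig × Tm Sig)
  lhs : Tm Sig
  rhs : Tm Sig
  lhs_alg : Tm.Algebraic lhs
  lhs_not_var : ∀ n, lhs ≠ Tm.var n
  fv_conds : ∀ p ∈ conds,
    (∀ n, Tm.FVar p.1 n → Tm.FVar lhs n) ∧ (∀ n, Tm.FVar p.2 n → Tm.FVar lhs n)
  fv_rhs : ∀ n, Tm.FVar rhs n → Tm.FVar lhs n

/-- Joinability: a common reduct. -/
def Joinable {α : Type} (R : α → α → Prop) (t u : α) : Prop :=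
  ∃ v, Relation.ReflTransGen R t v ∧ Relation.ReflTransGen R u v

/-- One stratum of conditional rewriting: the smallest rewrite relation such that
`lσ → rσ` for every rule whose conditions are joinable w.r.t. `prev`. -/
inductive CondStep {Sig : Type} (Rules : Set (CondRule Sig))
    (prev : Tm Sig → Tm Sig → Prop) : Tm Sig → Tm Sig → Prop
  | rule {ρ : CondRule Sig} (hρ : ρ ∈ Rules) (σ : ℕ → Tm Sig)
      (hconds : ∀ p ∈ ρ.conds, Joinable prev (Tm.subst σ p.1) (Tm.subst σ p.2)) :
      CondStep Rules prev (Tm.subst σ ρ.lhs) (Tm.subst σ ρ.rhs)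
  | abs {t u : Tm Sig} : CondStep Rules prev t u →
      CondStep Rules prev (Tm.lam t) (Tm.lam u)
  | appL {t u v : Tm Sig} : CondStep Rules prev t u →
      CondStep Rules prev (Tm.app t v) (Tm.app u v)
  | appR {t u v : Tm Sig} : CondStep Rules prev t u →
      CondStep Rules prev (Tm.app v t) (Tm.app v u)
  | substC (σ : ℕ → Tm Sig) {t u : Tm Sig} : CondStep Rules prev t u →
      CondStep Rules prev (Tm.subst σ t) (Tm.subst σ u)

/-- Stratified conditional rewriting `→_{R_i}`. -/
def CondRel {Sig : Type} (Rules : Set (CondRule Sig)) : ℕ → Tm Sig → Tm Sig → Prop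
  | 0 => fun _ _ => False
  | i + 1 => CondStep Rules (CondRel Rules i)

/-- Conditional rewriting `→_R = ⋃ i, →_{R_i}`. -/
def CondRew {Sig : Type} (Rules : Set (CondRule Sig)) (t u : Tm Sig) : Prop :=
  ∃ i, CondRel Rules i t u

/-- Stratified β-conditional rewriting `→_{R(β)_i}`: conditions are evaluated
w.r.t. `→_{β ∪ R(β)_{i-1}}`. -/
def BCondRel {Sig : Type} (Rules : Set (CondRule Sig)) : ℕ → Tm Sig → Tm Sig → Prop
  | 0 => fun _ _ => False
  | i + 1 => CondStep Rules (fun a b => Beta a b ∨ BCondRel Rules i a b)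

/-- β-conditional rewriting `→_{R(β)} = ⋃ i, →_{R(β)_i}`. -/
def BCondRew {Sig : Type} (Rules : Set (CondRule Sig)) (t u : Tm Sig) : Prop :=
  ∃ i, BCondRel Rules i t u

def IsConfluent {α : Type} (R : α → α → Prop) : Prop :=
  ∀ t u v, Relation.ReflTransGen R t u → Relation.ReflTransGen R t v →
    ∃ w, Relation.ReflTransGen R u w ∧ Relation.ReflTransGen R v w

def ConfluentOn {α : Type} (S : Set α) (R : α → α → Prop) : Prop :=
  ∀ t ∈ S, ∀ u v, Relation.ReflTransGen R t u → Relation.ReflTransGen R t v →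
    ∃ w, Relation.ReflTransGen R u w ∧ Relation.ReflTransGen R v w

def Commutes {α : Type} (R₁ R₂ : α → α → Prop) : Prop :=
  ∀ s u t, Relation.ReflTransGen R₁ s u → Relation.ReflTransGen R₂ s t →
    ∃ v, Relation.ReflTransGen R₂ u v ∧ Relation.ReflTransGen R₁ t v

def LeftLinear {Sig : Type} (Rules : Set (CondRule Sig)) : Prop :=
  ∀ ρ ∈ Rules, Tm.LinearTm ρ.lhs

/-- Semi-closed systems: in every rule the `ci` are closed applicative terms. -/
def SemiClosed {Sig : Type} (Rules : Set (CondRule Sig)) : Prop :=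
  ∀ ρ ∈ Rules, ∀ p ∈ ρ.conds, Tm.Applicative p.2 ∧ Tm.ClosedTm p.2

def RightApplicative {Sig : Type} (Rules : Set (CondRule Sig)) : Prop :=
  ∀ ρ ∈ Rules, Tm.Applicative ρ.rhs

def RightAlgebraic {Sig : Type} (Rules : Set (CondRule Sig)) : Prop :=
  ∀ ρ ∈ Rules, Tm.Algebraic ρ.rhs

/-- Algebraic systems: in every rule the `di`, `ci` and `r` are algebraic. -/
def AlgebraicSys {Sig : Type} (Rules : Set (CondRule Sig)) : Prop :=
  ∀ ρ ∈ Rules, (∀ p ∈ ρ.conds, Tm.Algebraic p.1 ∧ Tm.Algebraic p.2) ∧ Tm.Algebraic ρ.rhs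

/-- A term respects the arity `a` if it contains no subterm `f t1 … tn` with `n > a f`. -/
def RespectsArity {Sig : Type} (a : Sig → ℕ) (t : Tm Sig) : Prop :=
  ∀ (f : Sig) (ts : List (Tm Sig)),
    Tm.Subterm (Tm.appList (Tm.sym f) ts) t → ts.length ≤ a f

/-- A conditional rule respects `a` if the `di`, `ci` and both sides of `l ↦ r`
respect `a`, and `l = f l1 … lk` with `k = a f`. -/
def RuleRespectsArity {Sig : Type} (a : Sig → ℕ) (ρ : CondRule Sig) : Prop :=
  (∀ p ∈ ρ.conds, RespectsArity a p.1 ∧ RespectsArity a p.2) ∧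
  RespectsArity a ρ.lhs ∧ RespectsArity a ρ.rhs ∧
  ∃ (f : Sig) (ls : List (Tm Sig)), ρ.lhs = Tm.appList (Tm.sym f) ls ∧ ls.length = a f

def SysRespectsArity {Sig : Type} (a : Sig → ℕ) (Rules : Set (CondRule Sig)) : Prop :=
  ∀ ρ ∈ Rules, RuleRespectsArity a ρ

/-- `AN_a` : terms having a β-normal form, whose β-normal form respects `a`. -/
def ANset {Sig : Type} (a : Sig → ℕ) : Set (Tm Sig) :=
  {t | ∃ n, IsBnf t n ∧ RespectsArity a n}

/-- The rewrite relation of the unconditional system `R̄` containing `l ↦ di` and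
`l ↦ r` for each rule `d⃗ = c⃗ ⊃ l ↦ r` of `R`. -/
inductive BarRel {Sig : Type} (Rules : Set (CondRule Sig)) : Tm Sig → Tm Sig → Prop
  | ruleCond {ρ : CondRule Sig} (hρ : ρ ∈ Rules) {p : Tm Sig × Tm Sig} (hp : p ∈ ρ.conds)
      (σ : ℕ → Tm Sig) : BarRel Rules (Tm.subst σ ρ.lhs) (Tm.subst σ p.1)
  | ruleRhs {ρ : CondRule Sig} (hρ : ρ ∈ Rules) (σ : ℕ → Tm Sig) :
      BarRel Rules (Tm.subst σ ρ.lhs) (Tm.subst σ ρ.rhs)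
  | abs {t u : Tm Sig} : BarRel Rules t u → BarRel Rules (Tm.lam t) (Tm.lam u)
  | appL {t u v : Tm Sig} : BarRel Rules t u → BarRel Rules (Tm.app t v) (Tm.app u v)
  | appR {t u v : Tm Sig} : BarRel Rules t u → BarRel Rules (Tm.app v t) (Tm.app v u)
  | substC (σ : ℕ → Tm Sig) {t u : Tm Sig} : BarRel Rules t u →
      BarRel Rules (Tm.subst σ t) (Tm.subst σ u)

/-- Conditionally `(R, a)`-stable sets of terms. -/
def CondStable {Sig : Type} (Rules : Set (CondRule Sig)) (a : Sig → ℕ)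
    (S : Set (Tm Sig)) : Prop :=
  (∀ t ∈ S, RespectsArity a t) ∧
  (∀ t ∈ S, ∀ u, (Beta t u ∨ BarRel Rules t u) → u ∈ S) ∧
  (∀ t ∈ S, ∀ u, Tm.Subterm u t → u ∈ S)

/-- Head β-step along an application spine. -/
inductive HeadAux {Sig : Type} : Tm Sig → Tm Sig → Prop
  | beta (b a₀ : Tm Sig) : HeadAux (Tm.app (Tm.lam b) a₀) (Tm.subst1 a₀ b)
  | app {t u : Tm Sig} (v : Tm Sig) : HeadAux t u → HeadAux (Tm.app t v) (Tm.app u v)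

/-- Head β-reduction `→h` : `λx⃗.(λy.b) a₀ a₁ … aₙ →h λx⃗.b[y:=a₀] a₁ … aₙ`. -/
inductive HeadRed {Sig : Type} : Tm Sig → Tm Sig → Prop
  | base {t u : Tm Sig} : HeadAux t u → HeadRed t u
  | lam {t u : Tm Sig} : HeadRed t u → HeadRed (Tm.lam t) (Tm.lam u)

/-- The relation `≻` : (a) `λx⃗.v a1 … an ≻ ai` for `v` a variable or a symbol and
`n > 0`; (b) `λx⃗.(λy.b) a0 a1 … an ≻ λx⃗.b[y:=a0] a1 … an` (a head β-step). -/
def SuccRel {Sig : Type} (t u : Tm Sig) : Prop :=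
  (∃ (m : ℕ) (h : Tm Sig) (args : List (Tm Sig)),
    ((∃ n, h = Tm.var n) ∨ (∃ f, h = Tm.sym f)) ∧ args ≠ [] ∧
    t = Tm.lamN m (Tm.appList h args) ∧ u ∈ args)
  ∨ HeadRed t u

/-- The nested parallelization `▷_{R_i}` of `→_{R_i}`: the smallest parallel rewrite
relation with `lσ ▷ rτ` whenever `lσ →_{R_i} rσ` and `σ ▷ τ`. -/
inductive NPar {Sig : Type} (Rules : Set (CondRule Sig)) (i : ℕ) : Tm Sig → Tm Sig → Prop
  | var (n : ℕ) : NPar Rules i (Tm.var n) (Tm.var n)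
  | sym (f : Sig) : NPar Rules i (Tm.sym f) (Tm.sym f)
  | app {t₁ u₁ t₂ u₂ : Tm Sig} : NPar Rules i t₁ u₁ → NPar Rules i t₂ u₂ →
      NPar Rules i (Tm.app t₁ t₂) (Tm.app u₁ u₂)
  | abs {t u : Tm Sig} : NPar Rules i t u → NPar Rules i (Tm.lam t) (Tm.lam u)
  | substC (σ : ℕ → Tm Sig) {t u : Tm Sig} : NPar Rules i t u →
      NPar Rules i (Tm.subst σ t) (Tm.subst σ u)
  | rule {ρ : CondRule Sig} (hρ : ρ ∈ Rules) (σ τ : ℕ → Tm Sig)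
      (hstep : CondRel Rules i (Tm.subst σ ρ.lhs) (Tm.subst σ ρ.rhs))
      (hστ : ∀ n, NPar Rules i (σ n) (τ n)) :
      NPar Rules i (Tm.subst σ ρ.lhs) (Tm.subst τ ρ.rhs)

/-- The smallest parallel rewrite relation containing `R`. -/
inductive ParCl {Sig : Type} (R : Tm Sig → Tm Sig → Prop) : Tm Sig → Tm Sig → Prop
  | base {t u : Tm Sig} : R t u → ParCl R t u
  | var (n : ℕ) : ParCl R (Tm.var n) (Tm.var n)
  | sym (f : Sig) : ParCl R (Tm.sym f) (Tm.sym f)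
  | app {t₁ u₁ t₂ u₂ : Tm Sig} : ParCl R t₁ u₁ → ParCl R t₂ u₂ →
      ParCl R (Tm.app t₁ t₂) (Tm.app u₁ u₂)
  | abs {t u : Tm Sig} : ParCl R t u → ParCl R (Tm.lam t) (Tm.lam u)
  | substC (σ : ℕ → Tm Sig) {t u : Tm Sig} : ParCl R t u →
      ParCl R (Tm.subst σ t) (Tm.subst σ u)

/-- A rooted β-conditional rewrite step `lσ →_{R(β)_i} rσ` for the rule `ρ` and the
substitution `σ`: `ρ ∈ R` and the conditions of `ρ` instantiated by `σ` are joinable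
w.r.t. `→_{β ∪ R(β)_{i-1}}`. -/
def RootedBStep {Sig : Type} (Rules : Set (CondRule Sig)) :
    ℕ → CondRule Sig → (ℕ → Tm Sig) → Prop
  | 0 => fun _ _ => False
  | i + 1 => fun ρ σ => ρ ∈ Rules ∧
      ∀ p ∈ ρ.conds,
        Joinable (fun a b => Beta a b ∨ BCondRel Rules i a b)
          (Tm.subst σ p.1) (Tm.subst σ p.2)

/-- Subterm at a position (positions only descend through applications, which is
enough for algebraic left-hand sides). -/
def subtermAt {Sig : Type} : Tm Sig → List Bool → Option (Tm Sig)
  | t, [] => some t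
  | Tm.app a _, false :: p => subtermAt a p
  | Tm.app _ b, true :: p => subtermAt b p
  | _, _ :: _ => none

/-- Replacement at a position. -/
def replaceAt {Sig : Type} : Tm Sig → List Bool → Tm Sig → Option (Tm Sig)
  | _, [], s => some s
  | Tm.app a b, false :: p, s => (replaceAt a p s).map (fun a' => Tm.app a' b)
  | Tm.app a b, true :: p, s => (replaceAt b p s).map (fun b' => Tm.app a b')
  | _, _ :: _, _ => none

/-- Conditional critical pairs: an overlap of `ρ₂` at a non-variable position `p` of
the left-hand side of `ρ₁` via a most general unifier (here presented with a pair of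
substitutions, which accounts for variable-disjoint renamings). -/
def CriticalPair {Sig : Type} (Rules : Set (CondRule Sig))
    (conds : List (Tm Sig × Tm Sig)) (s t : Tm Sig) : Prop :=
  ∃ ρ₁ ∈ Rules, ∃ ρ₂ ∈ Rules, ∃ (p : List Bool) (w : Tm Sig) (σ₁ σ₂ : ℕ → Tm Sig),
    subtermAt ρ₁.lhs p = some w ∧
    (∀ n, w ≠ Tm.var n) ∧
    ¬ (ρ₁ = ρ₂ ∧ p = []) ∧
    Tm.subst σ₁ w = Tm.subst σ₂ ρ₂.lhs ∧
    (∀ τ₁ τ₂ : ℕ → Tm Sig, Tm.subst τ₁ w = Tm.subst τ₂ ρ₂.lhs →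
      ∃ δ : ℕ → Tm Sig, (∀ n, Tm.FVar ρ₁.lhs n → τ₁ n = Tm.subst δ (σ₁ n)) ∧
        (∀ n, Tm.FVar ρ₂.lhs n → τ₂ n = Tm.subst δ (σ₂ n))) ∧
    conds = ρ₁.conds.map (fun q => (Tm.subst σ₁ q.1, Tm.subst σ₁ q.2)) ++
            ρ₂.conds.map (fun q => (Tm.subst σ₂ q.1, Tm.subst σ₂ q.2)) ∧
    replaceAt (Tm.subst σ₁ ρ₁.lhs) p (Tm.subst σ₂ ρ₂.rhs) = some s ∧
    t = Tm.subst σ₁ ρ₁.rhs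

/-- A symbol is defined if it heads the left-hand side of some rule. -/
def DefinedSym {Sig : Type} (Rules : Set (CondRule Sig)) (f : Sig) : Prop :=
  ∃ ρ ∈ Rules, ∃ ts : List (Tm Sig), ρ.lhs = Tm.appList (Tm.sym f) ts

/-- OrthonormalSys systems. -/
def OrthonormalSys {Sig : Type} (Rules : Set (CondRule Sig)) : Prop :=
  LeftLinear Rules ∧
  (∀ ρ ∈ Rules, ∀ p ∈ ρ.conds, Tm.ClosedTm p.2 ∧ BetaNormal p.2 ∧
    ∀ f, DefinedSym Rules f → ¬ Tm.Subterm (Tm.sym f) p.2) ∧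
  (∀ (conds : List (Tm Sig × Tm Sig)) (s t : Tm Sig), CriticalPair Rules conds s t →
    ∃ i j : Fin conds.length, i ≠ j ∧
      (conds.get i).1 = (conds.get j).1 ∧ (conds.get i).2 ≠ (conds.get j).2)

/-- Dershowitz–Manna multiset extension of `<` on `ℕ`. -/
def MulLt (s t : Multiset ℕ) : Prop :=
  ∃ X Y Z : Multiset ℕ, Y ≠ 0 ∧ s = Z + X ∧ t = Z + Y ∧ ∀ x ∈ X, ∃ y ∈ Y, x < y

/-! ### Substitution calculus -/

namespace Tm

variable {Sig : Type}

/-- The renaming of `t` by `ξ`, as a substitution by variables. -/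
def ren (ξ : ℕ → ℕ) (t : Tm Sig) : Tm Sig := subst (fun n => var (ξ n)) t

/-- Lift a renaming under one binder. -/
def upr (ξ : ℕ → ℕ) : ℕ → ℕ
  | 0 => 0
  | n + 1 => ξ n + 1

theorem up_var_comp (ξ : ℕ → ℕ) :
    up (fun n => (var (ξ n) : Tm Sig)) = fun n => var (upr ξ n) := by
  funext n
  cases n <;> simp [up, upr, lift]

theorem lift_eq_subst (t : Tm Sig) : ∀ d,
    lift d t = subst (fun n => if n < d then var n else var (n + 1)) t := by
  induction t with
  | var n => intro d; rfl
  | sym f => intro d; rfl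
  | app t u iht ihu => intro d; simp [lift, subst, iht d, ihu d]
  | lam t ih =>
    intro d
    simp only [lift, subst, ih (d + 1)]
    congr 2
    funext n
    cases n with
    | zero => simp [up]
    | succ n =>
      by_cases h : n < d <;> simp [up, h, lift]

theorem lift_zero (t : Tm Sig) : lift 0 t = ren Nat.succ t := by
  rw [lift_eq_subst]; rfl

theorem subst_ren (t : Tm Sig) : ∀ (σ : ℕ → Tm Sig) (ξ : ℕ → ℕ),
    subst σ (ren ξ t) = subst (fun n => σ (ξ n)) t := by
  induction t with
  | var n => intros; rfl
  | sym f => intros; rfl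
  | app t u iht ihu =>
    intro σ ξ
    have h1 := iht σ ξ
    have h2 := ihu σ ξ
    simp only [ren] at h1 h2
    simp [ren, subst, h1, h2]
  | lam t ih =>
    intro σ ξ
    have h := ih (up σ) (upr ξ)
    simp only [ren] at h
    simp only [ren, subst, up_var_comp, h]
    congr 2
    funext n
    cases n <;> rfl

theorem ren_subst (t : Tm Sig) : ∀ (σ : ℕ → Tm Sig) (ξ : ℕ → ℕ),
    ren ξ (subst σ t) = subst (fun n => ren ξ (σ n)) t := by
  induction t with
  | var n => intros; rfl
  | sym f => intros; rfl
  | app t u iht ihu =>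
    intro σ ξ
    have h1 := iht σ ξ
    have h2 := ihu σ ξ
    simp only [ren] at h1 h2
    simp [ren, subst, h1, h2]
  | lam t ih =>
    intro σ ξ
    have h := ih (up σ) (upr ξ)
    simp only [ren] at h
    simp only [ren, subst, up_var_comp, h]
    congr 2
    funext n
    cases n with
    | zero => rfl
    | succ n =>
      have e1 := subst_ren (σ n) (fun n => var (upr ξ n)) Nat.succ
      have e2 := subst_ren (σ n) (fun n => var n.succ) ξ
      simp only [up, lift_zero]
      exact e1.trans e2.symm

theorem subst_subst (t : Tm Sig) : ∀ (σ τ : ℕ → Tm Sig),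
    subst τ (subst σ t) = subst (fun n => subst τ (σ n)) t := by
  induction t with
  | var n => intros; rfl
  | sym f => intros; rfl
  | app t u iht ihu => intro σ τ; simp [subst, iht, ihu]
  | lam t ih =>
    intro σ τ
    simp only [subst, ih]
    congr 2
    funext n
    cases n with
    | zero => rfl
    | succ n =>
      simp only [up, lift_zero]
      rw [subst_ren, ren_subst]
      simp only [up, lift_zero]

theorem subst_var (t : Tm Sig) : subst var t = t := by
  induction t with
  | var n => rfl
  | sym f => rfl
  | app t u iht ihu => simp [subst, iht, ihu]
  | lam t ih =>
    have h : up (var : ℕ → Tm Sig) = var := by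
      funext n; cases n <;> simp [up, lift]
    simp [subst, h, ih]

theorem subst_subst1 (σ : ℕ → Tm Sig) (u t : Tm Sig) :
    subst σ (subst1 u t) = subst1 (subst σ u) (subst (up σ) t) := by
  simp only [subst1, subst_subst]
  congr 1
  funext n
  cases n with
  | zero => rfl
  | succ n =>
    simp only [scons, up, lift_zero, subst_ren]
    exact (subst_var _).symm

end Tm

/-! ### Parallel β-reduction -/

/-- Parallel β-reduction `▷β`, presented without a constructor for closure under substitution
(which is derivable), so that case analysis is available. -/
inductive BPar {Sig : Type} : Tm Sig → Tm Sig → Prop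
  | var (n : ℕ) : BPar (Tm.var n) (Tm.var n)
  | sym (f : Sig) : BPar (Tm.sym f) (Tm.sym f)
  | app {t₁ u₁ t₂ u₂ : Tm Sig} : BPar t₁ u₁ → BPar t₂ u₂ →
      BPar (Tm.app t₁ t₂) (Tm.app u₁ u₂)
  | abs {t u : Tm Sig} : BPar t u → BPar (Tm.lam t) (Tm.lam u)
  | beta {t₁ u₁ t₂ u₂ : Tm Sig} : BPar t₁ u₁ → BPar t₂ u₂ →
      BPar (Tm.app (Tm.lam t₁) t₂) (Tm.subst1 u₂ u₁)

section

open Relation Tm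

variable {Sig : Type}

theorem BPar.refl (t : Tm Sig) : BPar t t := by
  induction t with
  | var n => exact .var n
  | sym f => exact .sym f
  | app t u iht ihu => exact .app iht ihu
  | lam t ih => exact .abs ih

theorem BPar.subst {t u : Tm Sig} (h : BPar t u) :
    ∀ σ : ℕ → Tm Sig, BPar (Tm.subst σ t) (Tm.subst σ u) := by
  induction h with
  | var n => intro σ; exact .refl _
  | sym f => intro σ; exact .sym f
  | app _ _ ih1 ih2 => intro σ; exact .app (ih1 σ) (ih2 σ)
  | abs _ ih => intro σ; exact .abs (ih _)
  | beta _ _ ih1 ih2 =>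
    intro σ
    rw [subst_subst1]
    exact .beta (ih1 _) (ih2 σ)

theorem BPar.up {σ τ : ℕ → Tm Sig} (h : ∀ n, BPar (σ n) (τ n)) (n : ℕ) :
    BPar (Tm.up σ n) (Tm.up τ n) := by
  cases n with
  | zero => exact .refl _
  | succ n =>
    simp only [Tm.up, lift_zero]
    exact (h n).subst _

/-- Substitution by pointwise `▷β`-related substitutions. -/
theorem BPar.subst_right (t : Tm Sig) : ∀ {σ τ : ℕ → Tm Sig}, (∀ n, BPar (σ n) (τ n)) →
    BPar (Tm.subst σ t) (Tm.subst τ t) := by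
  induction t with
  | var n => intro σ τ h; exact h n
  | sym f => intro σ τ h; exact .sym f
  | app t u iht ihu => intro σ τ h; exact .app (iht h) (ihu h)
  | lam t ih => intro σ τ h; exact .abs (ih (BPar.up h))

theorem BPar.subst_both {t u : Tm Sig} (h : BPar t u) :
    ∀ {σ τ : ℕ → Tm Sig}, (∀ n, BPar (σ n) (τ n)) →
    BPar (Tm.subst σ t) (Tm.subst τ u) := by
  induction h with
  | var n => intro σ τ hs; exact hs n
  | sym f => intro σ τ hs; exact .sym f
  | app _ _ ih1 ih2 => intro σ τ hs; exact .app (ih1 hs) (ih2 hs)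
  | abs _ ih => intro σ τ hs; exact .abs (ih (BPar.up hs))
  | beta _ _ ih1 ih2 =>
    intro σ τ hs
    rw [subst_subst1]
    exact .beta (ih1 (BPar.up hs)) (ih2 hs)

theorem BPar.subst1 {t t' u u' : Tm Sig} (ht : BPar t t') (hu : BPar u u') :
    BPar (Tm.subst1 u t) (Tm.subst1 u' t') := by
  refine ht.subst_both fun n => ?_
  cases n with
  | zero => exact hu
  | succ n => exact .refl _

theorem Beta.toBPar {t u : Tm Sig} (h : Beta t u) : BPar t u := by
  induction h with
  | beta t u => exact .beta (.refl _) (.refl _)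
  | abs _ ih => exact .abs ih
  | appL _ ih => exact .app ih (.refl _)
  | appR _ ih => exact .app (.refl _) ih
  | substC σ _ ih => exact ih.subst σ

/-- Congruence of the reflexive-transitive closure with respect to application. -/
theorem star_app {R : Tm Sig → Tm Sig → Prop}
    (hL : ∀ {t u v}, R t u → R (Tm.app t v) (Tm.app u v))
    (hR : ∀ {t u v}, R t u → R (Tm.app v t) (Tm.app v u))
    {t t' u u' : Tm Sig} (ht : ReflTransGen R t t') (hu : ReflTransGen R u u') :
    ReflTransGen R (Tm.app t u) (Tm.app t' u') :=
  (ht.lift (fun x => Tm.app x u) fun _ _ => hL).trans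
    (hu.lift (fun x => Tm.app t' x) fun _ _ => hR)

theorem BPar.toBetas {t u : Tm Sig} (h : BPar t u) : ReflTransGen Beta t u := by
  induction h with
  | var n => exact .refl
  | sym f => exact .refl
  | app _ _ ih1 ih2 => exact star_app Beta.appL Beta.appR ih1 ih2
  | abs _ ih => exact ih.lift Tm.lam fun _ _ => Beta.abs
  | beta _ _ ih1 ih2 =>
    exact (star_app Beta.appL Beta.appR (ih1.lift Tm.lam fun _ _ => Beta.abs) ih2).tail
      (.beta _ _)

/-! ### Algebraic patterns -/

/-- Algebraic terms by structural clauses on binary application: `Pat true` holds of the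
algebraic terms headed by a symbol, `Pat false` of all algebraic terms. -/
inductive Pat : Bool → Tm Sig → Prop
  | var (n : ℕ) : Pat false (Tm.var n)
  | sym (b : Bool) (f : Sig) : Pat b (Tm.sym f)
  | app (b : Bool) {t u : Tm Sig} : Pat true t → Pat false u → Pat b (Tm.app t u)

theorem Pat.weaken {b : Bool} {t : Tm Sig} (h : Pat true t) : Pat b t := by
  cases h with
  | sym _ f => exact .sym _ f
  | app _ h1 h2 => exact .app _ h1 h2

theorem Pat.appList (ts : List (Tm Sig)) : ∀ {h : Tm Sig}, Pat true h →
    (∀ t ∈ ts, Pat false t) → Pat true (Tm.appList h ts) := by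
  induction ts with
  | nil => intro h hh _; exact hh
  | cons a as ih =>
    intro h hh hts
    exact ih (.app _ hh (hts a (by simp))) fun t ht => hts t (by simp [ht])

theorem Tm.Algebraic.pat {t : Tm Sig} (h : Tm.Algebraic t) : Pat false t := by
  induction h with
  | var n => exact .var n
  | symApp f ts _ ih => exact (Pat.appList ts (.sym _ f) ih).weaken

theorem CondRule.lhs_pat (ρ : CondRule Sig) : Pat true ρ.lhs := by
  have h := ρ.lhs_alg.pat
  generalize hl : ρ.lhs = l at h
  cases h with
  | var n => exact absurd hl (ρ.lhs_not_var n)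
  | sym _ f => exact .sym _ f
  | app _ h1 h2 => exact .app _ h1 h2

theorem Pat.subst_ne_lam {l : Tm Sig} (h : Pat true l) (σ : ℕ → Tm Sig) (t : Tm Sig) :
    Tm.subst σ l ≠ Tm.lam t := by
  cases h <;> simp [Tm.subst]

theorem Pat.subst_congr {b : Bool} {l : Tm Sig} (h : Pat b l) {σ τ : ℕ → Tm Sig} :
    (∀ n, 0 < Tm.countVar l n → σ n = τ n) → Tm.subst σ l = Tm.subst τ l := by
  induction h with
  | var n => intro hs; exact hs n (by simp [Tm.countVar])
  | sym _ f => intro _; rfl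
  | app _ _ _ ih1 ih2 =>
    intro hs
    simp only [Tm.countVar] at hs
    simp only [Tm.subst]
    rw [ih1 fun n hn => hs n (by omega), ih2 fun n hn => hs n (by omega)]

/-- A parallel β-step out of an instance of a linear pattern takes place inside the
substitution. -/
theorem Pat.inv_BPar {b : Bool} {l : Tm Sig} (h : Pat b l) {σ : ℕ → Tm Sig} :
    Tm.LinearTm l → ∀ {u : Tm Sig}, BPar (Tm.subst σ l) u →
      ∃ τ : ℕ → Tm Sig, u = Tm.subst τ l ∧ ∀ n, BPar (σ n) (τ n) := by
  induction h with
  | var n =>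
    intro _ u hu
    refine ⟨fun m => if m = n then u else σ m, by simp [Tm.subst], fun m => ?_⟩
    by_cases hm : m = n
    · subst hm; simpa [Tm.subst] using hu
    · simpa [hm] using BPar.refl _
  | sym _ f =>
    intro _ u hu
    cases hu
    exact ⟨σ, rfl, fun n => .refl _⟩
  | @app b l₁ l₂ h1 h2 ih1 ih2 =>
    intro hlin u hu
    simp only [Tm.LinearTm, Tm.countVar] at hlin
    simp only [Tm.subst] at hu
    generalize hs : Tm.subst σ l₁ = s at hu
    cases hu with
    | app hu1 hu2 =>
      subst hs
      obtain ⟨τ₁, rfl, hτ₁⟩ := ih1 (fun n => by have := hlin n; omega) hu1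
      obtain ⟨τ₂, rfl, hτ₂⟩ := ih2 (fun n => by have := hlin n; omega) hu2
      -- By linearity the two halves share no variable, so `τ₁` and `τ₂` can be merged.
      refine ⟨fun n => if 0 < Tm.countVar l₁ n then τ₁ n else τ₂ n, ?_, fun n => ?_⟩
      · simp only [Tm.subst]
        congr 1
        · exact h1.subst_congr fun n hn => by simp [hn]
        · refine h2.subst_congr fun n hn => ?_
          have := hlin n
          rw [if_neg (by omega)]
      · dsimp only
        split
        · exact hτ₁ n
        · exact hτ₂ n
    | beta _ _ => exact absurd hs (h1.subst_ne_lam σ _)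

/-! ### Conditional steps -/

/-- Conditional rewriting as `CondStep`, without the constructor for closure under
substitution. The two agree when `prev` is closed under substitution. -/
inductive CStep (Rules : Set (CondRule Sig))
    (prev : Tm Sig → Tm Sig → Prop) : Tm Sig → Tm Sig → Prop
  | rule {ρ : CondRule Sig} (hρ : ρ ∈ Rules) (σ : ℕ → Tm Sig)
      (hconds : ∀ p ∈ ρ.conds, Joinable prev (Tm.subst σ p.1) (Tm.subst σ p.2)) :
      CStep Rules prev (Tm.subst σ ρ.lhs) (Tm.subst σ ρ.rhs)
  | abs {t u : Tm Sig} : CStep Rules prev t u →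
      CStep Rules prev (Tm.lam t) (Tm.lam u)
  | appL {t u v : Tm Sig} : CStep Rules prev t u →
      CStep Rules prev (Tm.app t v) (Tm.app u v)
  | appR {t u v : Tm Sig} : CStep Rules prev t u →
      CStep Rules prev (Tm.app v t) (Tm.app v u)

variable {Rules : Set (CondRule Sig)} {prev : Tm Sig → Tm Sig → Prop}

theorem CStep.subst (hprev : ∀ (σ : ℕ → Tm Sig) {t u}, prev t u →
      prev (Tm.subst σ t) (Tm.subst σ u))
    {t u : Tm Sig} (h : CStep Rules prev t u) :
    ∀ σ : ℕ → Tm Sig, CStep Rules prev (Tm.subst σ t) (Tm.subst σ u) := by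
  induction h with
  | rule hρ σ hc =>
    intro τ
    rw [subst_subst, subst_subst]
    refine .rule hρ _ fun p hp => ?_
    obtain ⟨v, h1, h2⟩ := hc p hp
    rw [← subst_subst, ← subst_subst]
    exact ⟨Tm.subst τ v, h1.lift (Tm.subst τ) fun _ _ => hprev τ,
      h2.lift (Tm.subst τ) fun _ _ => hprev τ⟩
  | abs _ ih => intro σ; exact .abs (ih _)
  | appL _ ih => intro σ; exact .appL (ih σ)
  | appR _ ih => intro σ; exact .appR (ih σ)

theorem CStep.stars_subst_right (hprev : ∀ (σ : ℕ → Tm Sig) {t u}, prev t u →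
      prev (Tm.subst σ t) (Tm.subst σ u)) (t : Tm Sig) :
    ∀ {σ τ : ℕ → Tm Sig}, (∀ n, ReflTransGen (CStep Rules prev) (σ n) (τ n)) →
      ReflTransGen (CStep Rules prev) (Tm.subst σ t) (Tm.subst τ t) := by
  induction t with
  | var n => intro σ τ h; exact h n
  | sym f => intro σ τ h; exact .refl
  | app t u iht ihu => intro σ τ h; exact star_app CStep.appL CStep.appR (iht h) (ihu h)
  | lam t ih =>
    intro σ τ h
    refine (ih fun n => ?_).lift Tm.lam fun _ _ => CStep.abs
    cases n with
    | zero => exact .refl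
    | succ n =>
      simp only [Tm.up, lift_zero]
      exact (h n).lift _ fun _ _ h' => h'.subst hprev _

theorem CStep.stars_subst1 (hprev : ∀ (σ : ℕ → Tm Sig) {t u}, prev t u →
      prev (Tm.subst σ t) (Tm.subst σ u)) {t t' u u' : Tm Sig}
    (ht : ReflTransGen (CStep Rules prev) t t') (hu : ReflTransGen (CStep Rules prev) u u') :
    ReflTransGen (CStep Rules prev) (Tm.subst1 u t) (Tm.subst1 u' t') := by
  refine (ht.lift _ fun _ _ h => h.subst hprev (Tm.scons u Tm.var)).trans
    (CStep.stars_subst_right hprev t' fun n => ?_)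
  cases n with
  | zero => exact hu
  | succ n => exact .refl

theorem CStep.inv_lam {a v : Tm Sig} (h : CStep Rules prev (Tm.lam a) v) :
    ∃ a', v = Tm.lam a' ∧ CStep Rules prev a a' := by
  generalize hs : Tm.lam a = s at h
  cases h with
  | rule hρ σ _ => exact absurd hs.symm (CondRule.lhs_pat _ |>.subst_ne_lam σ _)
  | abs h' => cases hs; exact ⟨_, rfl, h'⟩
  | appL _ => cases hs
  | appR _ => cases hs

theorem CStep.stars_inv_lam {a v : Tm Sig} (h : ReflTransGen (CStep Rules prev) (Tm.lam a) v) :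
    ∃ a', v = Tm.lam a' ∧ ReflTransGen (CStep Rules prev) a a' := by
  induction h with
  | refl => exact ⟨a, rfl, .refl⟩
  | tail _ hs ih =>
    obtain ⟨b, rfl, hb⟩ := ih
    obtain ⟨c, rfl, hc⟩ := hs.inv_lam
    exact ⟨c, rfl, hb.tail hc⟩

theorem CondStep.toCStep (hprev : ∀ (σ : ℕ → Tm Sig) {t u}, prev t u →
      prev (Tm.subst σ t) (Tm.subst σ u))
    {t u : Tm Sig} (h : CondStep Rules prev t u) : CStep Rules prev t u := by
  induction h with
  | rule hρ σ hc => exact .rule hρ σ hc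
  | abs _ ih => exact .abs ih
  | appL _ ih => exact .appL ih
  | appR _ ih => exact .appR ih
  | substC σ _ ih => exact ih.subst hprev σ

theorem CStep.toCondStep {t u : Tm Sig} (h : CStep Rules prev t u) :
    CondStep Rules prev t u := by
  induction h with
  | rule hρ σ hc => exact .rule hρ σ hc
  | abs _ ih => exact .abs ih
  | appL _ ih => exact .appL ih
  | appR _ ih => exact .appR ih

/-! ### Commutation -/

/-- Under confluence, reducts of joinable terms are joinable. -/
theorem Joinable.of_reducts {α : Type} {R : α → α → Prop} (hR : IsConfluent R) {s t s' t' : α}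
    (h : Joinable R s t) (hs : ReflTransGen R s s') (ht : ReflTransGen R t t') :
    Joinable R s' t' := by
  obtain ⟨v, hsv, htv⟩ := h
  obtain ⟨w, hw1, hw2⟩ := hR _ _ _ hs hsv
  obtain ⟨x, hx1, hx2⟩ := hR _ _ _ ht (htv.trans hw2)
  exact ⟨x, hw1.trans hx2, hx1⟩

/-- The local diagram between one conditional step and one parallel β-step. -/
theorem CStep.diagram (hlin : LeftLinear Rules) (hconf : IsConfluent prev)
    (hbeta : ∀ {t u}, Beta t u → prev t u)
    (hprev : ∀ (σ : ℕ → Tm Sig) {t u}, prev t u → prev (Tm.subst σ t) (Tm.subst σ u))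
    {t v : Tm Sig} (h : CStep Rules prev t v) :
    ∀ {u : Tm Sig}, BPar t u →
      ∃ w, ReflTransGen (CStep Rules prev) u w ∧ BPar v w := by
  induction h with
  | @rule ρ hρ σ hc =>
    intro u hu
    obtain ⟨τ, rfl, hτ⟩ := ρ.lhs_pat.inv_BPar (hlin ρ hρ) hu
    refine ⟨Tm.subst τ ρ.rhs, .single (.rule hρ τ fun p hp => ?_), BPar.subst_right _ hτ⟩
    have key : ∀ s, ReflTransGen prev (Tm.subst σ s) (Tm.subst τ s) := fun s =>
      ReflTransGen.mono (fun _ _ => hbeta) _ _ (BPar.subst_right s hτ).toBetas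
    exact (hc p hp).of_reducts hconf (key _) (key _)
  | abs _ ih =>
    intro u hu
    cases hu with
    | abs hu' =>
      obtain ⟨w, hw1, hw2⟩ := ih hu'
      exact ⟨Tm.lam w, hw1.lift Tm.lam fun _ _ => CStep.abs, .abs hw2⟩
  | appL hs ih =>
    intro u hu
    cases hu with
    | app hu1 hu2 =>
      obtain ⟨w, hw1, hw2⟩ := ih hu1
      exact ⟨_, star_app CStep.appL CStep.appR hw1 .refl, .app hw2 hu2⟩
    | beta hu1 hu2 =>
      -- The contracted abstraction survives the conditional step, so its body makes the step.
      obtain ⟨a', rfl, _⟩ := hs.inv_lam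
      obtain ⟨w, hw1, hw2⟩ := ih (.abs hu1)
      obtain ⟨w', rfl, hw'⟩ := CStep.stars_inv_lam hw1
      cases hw2 with
      | abs hw2' => exact ⟨_, CStep.stars_subst1 hprev hw' .refl, .beta hw2' hu2⟩
  | appR hs ih =>
    intro u hu
    cases hu with
    | app hu1 hu2 =>
      obtain ⟨w, hw1, hw2⟩ := ih hu2
      exact ⟨_, star_app CStep.appL CStep.appR .refl hw1, .app hu1 hw2⟩
    | beta hu1 hu2 =>
      obtain ⟨w, hw1, hw2⟩ := ih hu2
      exact ⟨_, CStep.stars_subst1 hprev .refl hw1, .beta hu1 hw2⟩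

/-- If `A`- and `B`-steps out of a common source close with one `A`-step against `B*`,
then `A*` and `B*` commute. -/
theorem commute_of_local {α : Type} {A B : α → α → Prop}
    (hloc : ∀ {t u v}, A t u → B t v → ∃ w, ReflTransGen B u w ∧ A v w)
    {t u v : α} (hu : ReflTransGen A t u) (hv : ReflTransGen B t v) :
    ∃ w, ReflTransGen B u w ∧ ReflTransGen A v w := by
  have strip : ∀ {t u v}, A t u → ReflTransGen B t v → ∃ w, ReflTransGen B u w ∧ A v w := by
    intro t u v ha hb
    induction hb with
    | refl => exact ⟨u, .refl, ha⟩
    | tail _ hs ih =>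
      obtain ⟨w, hw1, hw2⟩ := ih
      obtain ⟨x, hx1, hx2⟩ := hloc hw2 hs
      exact ⟨x, hw1.trans hx1, hx2⟩
  induction hu with
  | refl => exact ⟨v, hv, .refl⟩
  | tail _ hs ih =>
    obtain ⟨w, hw1, hw2⟩ := ih
    obtain ⟨x, hx1, hx2⟩ := strip hs hw1
    exact ⟨x, hx1, hw2.tail hx2⟩

theorem BCondRel.subst (i : ℕ) (σ : ℕ → Tm Sig) {t u : Tm Sig} (h : BCondRel Rules i t u) :
    BCondRel Rules i (Tm.subst σ t) (Tm.subst σ u) := by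
  cases i with
  | zero => exact h
  | succ i => exact CondStep.substC σ h

end

/-- For an orthonormal system `R` and every `i`, if `→_{β ∪ R(β)_i}`
is confluent then `→_{R(β)_{i+1}}` commutes with `→β`. -/
theorem orthonormal_commute_next_level {Sig : Type} (Rules : Set (CondRule Sig))
    (horth : OrthonormalSys Rules) (i : ℕ)
    (hconf : IsConfluent (fun a b : Tm Sig => Beta a b ∨ BCondRel Rules i a b)) :
    ∀ t u v : Tm Sig, Relation.ReflTransGen Beta t u →
      Relation.ReflTransGen (BCondRel Rules (i + 1)) t v →
      ∃ w, Relation.ReflTransGen (BCondRel Rules (i + 1)) u w ∧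
        Relation.ReflTransGen Beta v w := by
  have hprev : ∀ (σ : ℕ → Tm Sig) {t u}, (Beta t u ∨ BCondRel Rules i t u) →
      (Beta (Tm.subst σ t) (Tm.subst σ u) ∨
        BCondRel Rules i (Tm.subst σ t) (Tm.subst σ u)) :=
    fun σ _ _ h => h.imp (Beta.substC σ) (BCondRel.subst i σ)
  intro t u v hu hv
  obtain ⟨w, hw1, hw2⟩ := commute_of_local
    (fun ha hb => CStep.diagram (Rules := Rules) horth.1 hconf Or.inl hprev hb ha)
    (Relation.ReflTransGen.mono (fun _ _ => Beta.toBPar) _ _ hu)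
    (Relation.ReflTransGen.mono (fun _ _ h => CondStep.toCStep hprev h) _ _ hv)
  refine ⟨w, Relation.ReflTransGen.mono (fun _ _ h => CStep.toCondStep h) _ _ hw1, ?_⟩
  clear hw1
  induction hw2 with
  | refl => exact .refl
  | tail _ hs ih => exact ih.trans hs.toBetas
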